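/- arXiv:2010.10408 — 3 statements merged into one kernel-verified Lean document; each statement's English description precedes it below -/
import Mathlib

section
/- Let Δ ≥ 1, let 𝒢 = (V,(E_t)_{t=1}^τ) be a temporal graph, and let d ≥ 1 with dΔ ≤ τ. Let M be a Δ-temporal matching of 𝒢 and let M' := M[Δ(d−1)+1, Δd]. Let N be a Δ-temporal matching of 𝒢 all of whose time labels lie in [Δ(d−1)+1, Δd], such that |N| ≥ |M'| and every time edge of N is Δ-independent from every time edge of M \ M'. Then (M \ M') ∪ N is a Δ-temporal matching of 𝒢 of size at least |M|. -/
/-- A temporal graph on vertex set `V`: a lifetime `tau` and edge sets `E t`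
(undirected edges, modeled as `Sym2 V`) for each time step. Only times
`1 ≤ t ≤ tau` give rise to time edges. -/
structure TemporalGraph (V : Type*) where
  tau : ℕ
  E : ℕ → Finset (Sym2 V)

variable {V : Type*}

/-- `(e, t)` is a time edge of `G`. -/
def IsTimeEdge (G : TemporalGraph V) (et : Sym2 V × ℕ) : Prop :=
  et.1 ∈ G.E et.2 ∧ 1 ≤ et.2 ∧ et.2 ≤ G.tau

/-- Two (undirected) edges share an endpoint. -/
def ShareEndpoint (e f : Sym2 V) : Prop := ∃ v, v ∈ e ∧ v ∈ f

/-- Two time edges are `Δ`-independent: the edges share no endpoint,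
or the time labels are at least `Δ` apart. -/
def DeltaIndep (Δ : ℕ) (x y : Sym2 V × ℕ) : Prop :=
  ¬ ShareEndpoint x.1 y.1 ∨ (Δ : ℤ) ≤ |(x.2 : ℤ) - (y.2 : ℤ)|

/-- A `Δ`-temporal matching of `G`: a set of time edges of `G` that are
pairwise `Δ`-independent. -/
def IsTemporalMatching (G : TemporalGraph V) (Δ : ℕ) (M : Finset (Sym2 V × ℕ)) : Prop :=
  (∀ et ∈ M, IsTimeEdge G et) ∧ ∀ x ∈ M, ∀ y ∈ M, x ≠ y → DeltaIndep Δ x y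

/-- `M[a,b]`: the time edges of `M` with time label between `a` and `b`. -/
def restrict (M : Finset (Sym2 V × ℕ)) (a b : ℕ) : Finset (Sym2 V × ℕ) :=
  M.filter (fun et => a ≤ et.2 ∧ et.2 ≤ b)

/-- `G[a,b]`: the temporal graph on `V` whose time edges are exactly those
time edges of `G` with time label between `a` and `b`. -/
def tgSlice (G : TemporalGraph V) (a b : ℕ) : TemporalGraph V :=
  { tau := G.tau, E := fun t => if a ≤ t ∧ t ≤ b then G.E t else ∅ }

/-- `ν` suffices as a `Δ`-vertex cover bound for `G`: every `Δ` consecutive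
layers can be covered by at most `ν` vertices. -/
def IsDeltaVC (G : TemporalGraph V) (Δ ν : ℕ) : Prop :=
  ∀ i, 1 ≤ i → i ≤ G.tau - Δ + 1 →
    ∃ S : Finset V, S.card ≤ ν ∧
      ∀ t ∈ Finset.Icc i (i + Δ - 1), ∀ e ∈ G.E t, ∃ v ∈ S, v ∈ e

/-- `ν` is the `Δ`-vertex cover number of `G` (the minimum such bound). -/
def IsDeltaVCNum (G : TemporalGraph V) (Δ ν : ℕ) : Prop :=
  IsDeltaVC G Δ ν ∧ ∀ μ, IsDeltaVC G Δ μ → ν ≤ μ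

/-- The maximum size of a `Δ`-temporal matching of `G`. -/
noncomputable def maxMatchingSize (G : TemporalGraph V) (Δ : ℕ) : ℕ :=
  sSup { k | ∃ M : Finset (Sym2 V × ℕ), IsTemporalMatching G Δ M ∧ M.card = k }

theorem ShareEndpoint.refl (e : Sym2 V) : ShareEndpoint e e :=
  ⟨e.out.1, e.out_fst_mem, e.out_fst_mem⟩

theorem ShareEndpoint.symm {e f : Sym2 V} : ShareEndpoint e f → ShareEndpoint f e :=
  fun ⟨v, hve, hvf⟩ => ⟨v, hvf, hve⟩

theorem DeltaIndep.symm {Δ : ℕ} {x y : Sym2 V × ℕ} (h : DeltaIndep Δ x y) :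
    DeltaIndep Δ y x :=
  h.imp (mt ShareEndpoint.symm) (·.trans_eq (abs_sub_comm _ _))

theorem not_deltaIndep_self {Δ : ℕ} (hΔ : 1 ≤ Δ) (x : Sym2 V × ℕ) : ¬ DeltaIndep Δ x x := by
  rintro (hshare | hfar)
  · exact hshare (.refl x.1)
  · rw [sub_self, abs_zero] at hfar
    omega

theorem disjoint_of_deltaIndep {Δ : ℕ} (hΔ : 1 ≤ Δ) {M N : Finset (Sym2 V × ℕ)}
    (h : ∀ x ∈ M, ∀ y ∈ N, DeltaIndep Δ x y) : Disjoint M N :=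
  Finset.disjoint_left.mpr fun x hxM hxN => not_deltaIndep_self hΔ x (h x hxM x hxN)

namespace IsTemporalMatching

variable {G : TemporalGraph V} {Δ : ℕ} {M N : Finset (Sym2 V × ℕ)}

theorem subset (hM : IsTemporalMatching G Δ M) (hNM : N ⊆ M) : IsTemporalMatching G Δ N :=
  ⟨fun x hx => hM.1 x (hNM hx), fun x hx y hy => hM.2 x (hNM hx) y (hNM hy)⟩

theorem union [DecidableEq V] (hM : IsTemporalMatching G Δ M) (hN : IsTemporalMatching G Δ N)
    (h : ∀ x ∈ M, ∀ y ∈ N, DeltaIndep Δ x y) : IsTemporalMatching G Δ (M ∪ N) := by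
  refine ⟨fun x hx => (Finset.mem_union.mp hx).elim (hM.1 x) (hN.1 x), ?_⟩
  intro x hx y hy hxy
  rcases Finset.mem_union.mp hx with hxM | hxN <;> rcases Finset.mem_union.mp hy with hyM | hyN
  · exact hM.2 x hxM y hyM hxy
  · exact h x hxM y hyN
  · exact (h y hyM x hxN).symm
  · exact hN.2 x hxN y hyN hxy

end IsTemporalMatching

theorem statement4_general [DecidableEq V] {G : TemporalGraph V} {Δ : ℕ} (hΔ : 1 ≤ Δ)
    {M R N : Finset (Sym2 V × ℕ)} (hM : IsTemporalMatching G Δ M)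
    (hN : IsTemporalMatching G Δ N) (hcard : R.card ≤ N.card)
    (hindep : ∀ x ∈ N, ∀ y ∈ M \ R, DeltaIndep Δ x y) :
    IsTemporalMatching G Δ ((M \ R) ∪ N) ∧ M.card ≤ ((M \ R) ∪ N).card := by
  have hindep_symm : ∀ x ∈ M \ R, ∀ y ∈ N, DeltaIndep Δ x y :=
    fun x hx y hy => (hindep y hy x hx).symm
  refine ⟨(hM.subset Finset.sdiff_subset).union hN hindep_symm, ?_⟩
  calc
    M.card ≤ (M \ R).card + R.card := Finset.card_le_card_sdiff_add_card
    _ ≤ (M \ R).card + N.card := by gcongr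
    _ = ((M \ R) ∪ N).card :=
      (Finset.card_union_of_disjoint (disjoint_of_deltaIndep hΔ hindep_symm)).symm

/-- Let `M` be a `Δ`-temporal matching of `G`, let
`M' = M[Δ(d-1)+1, Δd]`, and let `N` be a `Δ`-temporal matching of `G` with all
time labels in `[Δ(d-1)+1, Δd]` such that `|N| ≥ |M'|` and every time edge of `N`
is `Δ`-independent from every time edge of `M \ M'`. Then `(M \ M') ∪ N` is a
`Δ`-temporal matching of `G` of size at least `|M|`. -/
theorem statement4 {V : Type*} [DecidableEq V] (Δ d : ℕ) (hΔ : 1 ≤ Δ) (hd : 1 ≤ d)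
    (G : TemporalGraph V) (htau : d * Δ ≤ G.tau)
    (M N : Finset (Sym2 V × ℕ)) (hM : IsTemporalMatching G Δ M)
    (hN : IsTemporalMatching G Δ N)
    (hNwin : ∀ et ∈ N, Δ * (d - 1) + 1 ≤ et.2 ∧ et.2 ≤ Δ * d)
    (hcard : (restrict M (Δ * (d - 1) + 1) (Δ * d)).card ≤ N.card)
    (hindep : ∀ x ∈ N, ∀ y ∈ M \ restrict M (Δ * (d - 1) + 1) (Δ * d),
      DeltaIndep Δ x y) :
    IsTemporalMatching G Δ ((M \ restrict M (Δ * (d - 1) + 1) (Δ * d)) ∪ N) ∧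
      M.card ≤ ((M \ restrict M (Δ * (d - 1) + 1) (Δ * d)) ∪ N).card :=
  statement4_general hΔ hM hN hcard hindep
end

section
/- Let Δ ≥ 2 and let T be a Δ-postfix tree rooted at v with leaves v_1,…,v_Δ in postfix order. Let [a,b] be a nonempty proper subinterval of [Δ] with a = 1 or b = Δ, and let S := N_T(⋃_{i ∈ [Δ]\[a,b]} V(P_i)) be the [a,b]-separator of T, where P_i is the v_i–v path in T. Then no two distinct vertices of S have the same distance to the root v. -/
/-- A rooted tree on vertex type `α`, given by a parent function: the root is
its own parent and every vertex reaches the root by iterating `parent`. -/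
structure RTree (α : Type*) where
  root : α
  parent : α → α
  parent_root : parent root = root
  reaches_root : ∀ v, ∃ n, parent^[n] v = root

namespace RTree

variable {α : Type*} (T : RTree α)

/-- `v` is a descendant of `u` (possibly `v = u`). -/
def Desc (u v : α) : Prop := ∃ n, T.parent^[n] v = u

/-- The vertex set `V(P_v)` of the (unique) path from `v` to the root. -/
def pathSet (v : α) : Set α := { u | T.Desc u v }

/-- `w` is a child of `u`. -/
def IsChild (w u : α) : Prop := w ≠ T.root ∧ T.parent w = u

/-- A leaf is a vertex with no children. -/
def IsLeaf (v : α) : Prop := ∀ w, ¬ T.IsChild w v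

/-- Two vertices are adjacent in the (undirected) tree iff one is a child of
the other. -/
def Adj (u w : α) : Prop := T.IsChild u w ∨ T.IsChild w u

/-- The neighborhood `N_T(X)` of a vertex set `X`: vertices outside `X`
adjacent to some vertex of `X`. -/
def nbhd (X : Set α) : Set α := { v | v ∉ X ∧ ∃ u ∈ X, T.Adj v u }

/-- The depth of `v`: its distance to the root. -/
noncomputable def depth (v : α) : ℕ := sInf { n | T.parent^[n] v = T.root }

end RTree

/-- A `Δ`-postfix tree: a rooted full binary tree of depth at most `⌈log₂ Δ⌉`
whose leaves are exactly `leaf 1, …, leaf Δ`, listed in post order (for every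
vertex `u`, the set of indices of leaves below `u` is a set of consecutive
integers). -/
structure DeltaPostfixTree (α : Type*) (Δ : ℕ) extends RTree α where
  leaf : ℕ → α
  leaf_isLeaf : ∀ i ∈ Finset.Icc 1 Δ, toRTree.IsLeaf (leaf i)
  leaf_injOn : ∀ i ∈ Finset.Icc 1 Δ, ∀ j ∈ Finset.Icc 1 Δ, leaf i = leaf j → i = j
  leaf_surj : ∀ v, toRTree.IsLeaf v → ∃ i ∈ Finset.Icc 1 Δ, leaf i = v
  full_binary : ∀ v, ¬ toRTree.IsLeaf v →
    {w | toRTree.IsChild w v}.ncard = 2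
  depth_le : ∀ v, toRTree.depth v ≤ Nat.clog 2 Δ
  post_order : ∀ u, ∀ i ∈ Finset.Icc 1 Δ, ∀ j ∈ Finset.Icc 1 Δ, ∀ k ∈ Finset.Icc 1 Δ,
    i ≤ j → j ≤ k → toRTree.Desc u (leaf i) → toRTree.Desc u (leaf k) →
    toRTree.Desc u (leaf j)

/-- The `[a,b]`-separator of a `Δ`-postfix tree:
`S = N_T(⋃_{i ∈ [Δ] \ [a,b]} V(P_i))`, where `P_i` is the path from the `i`-th
leaf to the root. -/
def separator {α : Type*} {Δ : ℕ} (T : DeltaPostfixTree α Δ) (a b : ℕ) : Set α :=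
  T.toRTree.nbhd
    (⋃ i ∈ (Finset.Icc 1 Δ \ Finset.Icc a b), T.toRTree.pathSet (T.leaf i))

/-!
Let `X` be the union of the root paths of the leaves outside `[a,b]`. Since `X` is closed under
taking parents, `S = N_T(X)` consists of the vertices outside `X` whose parent lies in `X`. Each
such parent has a child in `X`, so, the tree being binary, it has only one child in `S`: a vertex
of `S` is determined by its parent. This parent lies above a leaf with index outside `[a,b]` and
above a leaf with index in `[a,b]`. When `[a,b]` touches an end of `[Δ]`, all such pairs of indices
straddle the other end `c` of `[a,b]`, so by post order the parents of the vertices of `S` all lie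
on the single path `P_c`, where depth determines the vertex.
-/

namespace RTree

variable {α : Type*} {T : RTree α} {u v w z : α}

lemma iterate_parent_depth (T : RTree α) (v : α) : T.parent^[T.depth v] v = T.root :=
  Nat.sInf_mem (T.reaches_root v)

lemma depth_le_of_iterate_parent_eq_root {n : ℕ} (h : T.parent^[n] v = T.root) : T.depth v ≤ n :=
  Nat.sInf_le h

lemma depth_eq_zero_iff : T.depth v = 0 ↔ v = T.root := by
  constructor
  · intro h
    simpa only [h, Function.iterate_zero_apply] using T.iterate_parent_depth v
  · rintro rfl
    exact Nat.le_zero.mp (depth_le_of_iterate_parent_eq_root rfl)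

lemma depth_parent (T : RTree α) (v : α) : T.depth (T.parent v) = T.depth v - 1 := by
  by_cases hv : v = T.root
  · rw [hv, T.parent_root, depth_eq_zero_iff.mpr rfl]
  · obtain ⟨n, hn⟩ := Nat.exists_eq_succ_of_ne_zero (mt depth_eq_zero_iff.mp hv)
    have parent_le : T.depth (T.parent v) ≤ n := by
      apply depth_le_of_iterate_parent_eq_root
      rw [← Function.iterate_succ_apply, ← hn, T.iterate_parent_depth]
    have le_parent : T.depth v ≤ T.depth (T.parent v) + 1 := by
      apply depth_le_of_iterate_parent_eq_root
      rw [Function.iterate_succ_apply, T.iterate_parent_depth]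
    omega

lemma IsChild.depth_eq (h : T.IsChild w u) : T.depth w = T.depth u + 1 := by
  obtain ⟨hw, rfl⟩ := h
  have := mt depth_eq_zero_iff.mp hw
  rw [T.depth_parent]
  omega

lemma depth_iterate_parent (T : RTree α) (n : ℕ) (v : α) :
    T.depth (T.parent^[n] v) = T.depth v - n := by
  induction n with
  | zero => rfl
  | succ n ih => rw [Function.iterate_succ_apply', T.depth_parent, ih, Nat.sub_sub]

lemma Desc.eq_iterate_parent (h : T.Desc u z) : u = T.parent^[T.depth z - T.depth u] z := by
  obtain ⟨n, rfl⟩ := h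
  rw [T.depth_iterate_parent]
  rcases le_total n (T.depth z) with hn | hn
  · rw [Nat.sub_sub_self hn]
  · rw [Nat.sub_eq_zero_of_le hn, Nat.sub_zero, T.iterate_parent_depth,
      ← depth_eq_zero_iff, T.depth_iterate_parent, Nat.sub_eq_zero_of_le hn]

lemma injOn_depth_pathSet (T : RTree α) (z : α) : Set.InjOn T.depth (T.pathSet z) := by
  intro u hu w hw h
  rw [Desc.eq_iterate_parent hu, h, ← Desc.eq_iterate_parent hw]

lemma Desc.parent (h : T.Desc u v) : T.Desc (T.parent u) v := by
  obtain ⟨n, rfl⟩ := h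
  exact ⟨n + 1, Function.iterate_succ_apply' _ _ _⟩

lemma Desc.trans (huv : T.Desc u v) (hvw : T.Desc v w) : T.Desc u w := by
  obtain ⟨m, rfl⟩ := huv
  obtain ⟨n, rfl⟩ := hvw
  exact ⟨m + n, Function.iterate_add_apply _ _ _ _⟩

lemma IsChild.desc (h : T.IsChild w u) : T.Desc u w :=
  ⟨1, h.2⟩

lemma Desc.exists_isChild (h : T.Desc u z) (hne : u ≠ z) :
    ∃ w, T.IsChild w u ∧ T.Desc w z := by
  obtain ⟨n, hn⟩ := h
  induction n with
  | zero => exact absurd hn.symm hne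
  | succ n ih =>
    rw [Function.iterate_succ_apply'] at hn
    by_cases hroot : T.parent^[n] z = T.root
    · rw [hroot, T.parent_root] at hn
      exact ih (hroot.trans hn)
    · exact ⟨T.parent^[n] z, ⟨hroot, hn⟩, n, rfl⟩

/-- A descendant of `v` of maximal depth is a leaf. -/
lemma exists_isLeaf_desc (hT : BddAbove (Set.range T.depth)) (v : α) :
    ∃ l, T.IsLeaf l ∧ T.Desc v l := by
  obtain ⟨l, hvl, hl⟩ : sSup (T.depth '' {l | T.Desc v l}) ∈ T.depth '' {l | T.Desc v l} :=
    Nat.sSup_mem ⟨_, v, ⟨0, rfl⟩, rfl⟩ (hT.mono (Set.image_subset_range _ _))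
  refine ⟨l, fun w hwl => ?_, hvl⟩
  have hw : T.depth w ≤ T.depth l :=
    hl ▸ le_csSup (hT.mono (Set.image_subset_range _ _)) ⟨w, hvl.trans hwl.desc, rfl⟩
  exact absurd hwl.depth_eq (by omega)

lemma isChild_parent_of_notMem {X : Set α} (hv : v ∉ X) (hpv : T.parent v ∈ X) :
    T.IsChild v (T.parent v) := by
  refine ⟨?_, rfl⟩
  rintro rfl
  exact hv (T.parent_root ▸ hpv)

lemma mem_nbhd_iff_of_mapsTo_parent {X : Set α} (hX : Set.MapsTo T.parent X X) :
    v ∈ T.nbhd X ↔ v ∉ X ∧ T.parent v ∈ X := by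
  constructor
  · rintro ⟨hv, u, hu, ⟨-, rfl⟩ | ⟨-, rfl⟩⟩
    · exact ⟨hv, hu⟩
    · exact absurd (hX hu) hv
  · rintro ⟨hv, hpv⟩
    exact ⟨hv, T.parent v, hpv, Or.inl (isChild_parent_of_notMem hv hpv)⟩

/-- The union of the paths from the vertices of `L` to the root. The `[a,b]`-separator is its
neighborhood when `L` is the set of leaves with index outside `[a,b]`. -/
def rootPaths (T : RTree α) (L : Set α) : Set α :=
  ⋃ l ∈ L, T.pathSet l

variable {L : Set α}

lemma mem_rootPaths : u ∈ T.rootPaths L ↔ ∃ l ∈ L, T.Desc u l := by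
  simp only [rootPaths, pathSet, Set.mem_iUnion, Set.mem_ofPred_eq, exists_prop]

lemma mem_nbhd_rootPaths :
    v ∈ T.nbhd (T.rootPaths L) ↔ v ∉ T.rootPaths L ∧ T.parent v ∈ T.rootPaths L := by
  refine mem_nbhd_iff_of_mapsTo_parent fun u hu => ?_
  obtain ⟨l, hl, hul⟩ := mem_rootPaths.mp hu
  exact mem_rootPaths.mpr ⟨l, hl, hul.parent⟩

lemma exists_isChild_mem_rootPaths (hL : ∀ l ∈ L, T.IsLeaf l) (hu : u ∈ T.rootPaths L)
    (hleaf : ¬ T.IsLeaf u) : ∃ w ∈ T.rootPaths L, T.IsChild w u := by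
  obtain ⟨l, hl, hul⟩ := mem_rootPaths.mp hu
  obtain ⟨w, hwu, hwl⟩ := hul.exists_isChild (by rintro rfl; exact hleaf (hL _ hl))
  exact ⟨w, mem_rootPaths.mpr ⟨l, hl, hwl⟩, hwu⟩

lemma injOn_parent_nbhd_rootPaths (hT : ∀ u, {w | T.IsChild w u}.encard ≤ 2)
    (hL : ∀ l ∈ L, T.IsLeaf l) : Set.InjOn T.parent (T.nbhd (T.rootPaths L)) := by
  intro x hx y hy hxy
  obtain ⟨hxL, hpxL⟩ := mem_nbhd_rootPaths.mp hx
  obtain ⟨hyL, hpyL⟩ := mem_nbhd_rootPaths.mp hy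
  have hxu : T.IsChild x (T.parent x) := isChild_parent_of_notMem hxL hpxL
  have hyu : T.IsChild y (T.parent x) := hxy ▸ isChild_parent_of_notMem hyL hpyL
  obtain ⟨w, hwL, hwu⟩ := exists_isChild_mem_rootPaths hL hpxL fun hleaf => hleaf x hxu
  have siblings_subsingleton : ({z | T.IsChild z (T.parent x)} \ {w}).encard ≤ 1 := by
    have := hT (T.parent x)
    rw [← Set.encard_sdiff_singleton_add_one (a := w) hwu, ← one_add_one_eq_two] at this
    exact (ENat.add_le_add_iff_right ENat.one_ne_top).mp this
  exact Set.encard_le_one_iff.mp siblings_subsingleton x y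
    ⟨hxu, (ne_of_mem_of_not_mem hwL hxL).symm⟩ ⟨hyu, (ne_of_mem_of_not_mem hwL hyL).symm⟩

lemma injOn_depth_nbhd_rootPaths (hT : ∀ u, {w | T.IsChild w u}.encard ≤ 2)
    (hL : ∀ l ∈ L, T.IsLeaf l) (hz : ∀ x ∈ T.nbhd (T.rootPaths L), T.Desc (T.parent x) z) :
    Set.InjOn T.depth (T.nbhd (T.rootPaths L)) := by
  intro x hx y hy hxy
  apply injOn_parent_nbhd_rootPaths hT hL hx hy
  apply T.injOn_depth_pathSet z (hz x hx) (hz y hy)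
  rw [T.depth_parent, T.depth_parent, hxy]

end RTree

namespace DeltaPostfixTree

open RTree

variable {α : Type*} {Δ : ℕ} {T : DeltaPostfixTree α Δ} {a b : ℕ} {x : α}

lemma encard_children_le_two (T : DeltaPostfixTree α Δ) (u : α) :
    {w | T.IsChild w u}.encard ≤ 2 := by
  by_cases hu : T.IsLeaf u
  · have no_children : {w | T.IsChild w u} = ∅ := Set.eq_empty_of_forall_notMem hu
    simp only [no_children, Set.encard_empty, zero_le]
  · have hcard := T.full_binary u hu
    have hfin := Set.finite_of_ncard_ne_zero (hcard.trans_ne two_ne_zero)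
    rw [← hfin.cast_ncard_eq, hcard, Nat.cast_ofNat]

lemma exists_desc_leaf (T : DeltaPostfixTree α Δ) (u : α) :
    ∃ i ∈ Finset.Icc 1 Δ, T.Desc u (T.leaf i) := by
  have depth_bddAbove : BddAbove (Set.range T.depth) :=
    ⟨Nat.clog 2 Δ, Set.forall_mem_range.mpr T.depth_le⟩
  obtain ⟨l, hl, hul⟩ := exists_isLeaf_desc depth_bddAbove u
  obtain ⟨i, hi, rfl⟩ := T.leaf_surj l hl
  exact ⟨i, hi, hul⟩

lemma separator_eq_nbhd_rootPaths (T : DeltaPostfixTree α Δ) (a b : ℕ) :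
    separator T a b =
      T.nbhd (T.rootPaths (T.leaf '' ↑(Finset.Icc 1 Δ \ Finset.Icc a b))) := by
  rw [rootPaths, Set.biUnion_image]
  rfl

lemma exists_notMem_Icc_desc_leaf (hx : x ∈ separator T a b) :
    ∃ i ∈ Finset.Icc 1 Δ, i ∉ Finset.Icc a b ∧ T.Desc (T.parent x) (T.leaf i) := by
  rw [separator_eq_nbhd_rootPaths] at hx
  obtain ⟨_, ⟨i, hi, rfl⟩, hxi⟩ := mem_rootPaths.mp (mem_nbhd_rootPaths.mp hx).2
  obtain ⟨hiΔ, hiab⟩ := Finset.mem_sdiff.mp hi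
  exact ⟨i, hiΔ, hiab, hxi⟩

lemma exists_mem_Icc_desc_leaf (hx : x ∈ separator T a b) :
    ∃ j ∈ Finset.Icc 1 Δ, j ∈ Finset.Icc a b ∧ T.Desc x (T.leaf j) := by
  obtain ⟨j, hj, hxj⟩ := T.exists_desc_leaf x
  refine ⟨j, hj, ?_, hxj⟩
  by_contra hjab
  rw [separator_eq_nbhd_rootPaths] at hx
  exact hx.1 (mem_rootPaths.mpr ⟨_, ⟨j, Finset.mem_sdiff.mpr ⟨hj, hjab⟩, rfl⟩, hxj⟩)

lemma desc_parent_leaf_of_mem_separator_one (hx : x ∈ separator T 1 b) :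
    T.Desc (T.parent x) (T.leaf b) := by
  obtain ⟨i, hi, hib, hxi⟩ := exists_notMem_Icc_desc_leaf hx
  obtain ⟨j, hj, hjb, hxj⟩ := exists_mem_Icc_desc_leaf hx
  have hjb_le : j ≤ b := (Finset.mem_Icc.mp hjb).2
  have hb_le_i : b ≤ i := by simp only [Finset.mem_Icc] at hi hib; omega
  have hb : b ∈ Finset.Icc 1 Δ := by simp only [Finset.mem_Icc] at hi hj ⊢; omega
  exact T.post_order _ j hj b hb i hi hjb_le hb_le_i hxj.parent hxi

lemma desc_parent_leaf_of_mem_separator_last (hx : x ∈ separator T a Δ) :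
    T.Desc (T.parent x) (T.leaf a) := by
  obtain ⟨i, hi, hia, hxi⟩ := exists_notMem_Icc_desc_leaf hx
  obtain ⟨j, hj, haj, hxj⟩ := exists_mem_Icc_desc_leaf hx
  have ha_le_j : a ≤ j := (Finset.mem_Icc.mp haj).1
  have hi_le_a : i ≤ a := by simp only [Finset.mem_Icc] at hi hia; omega
  have ha : a ∈ Finset.Icc 1 Δ := by simp only [Finset.mem_Icc] at hi hj ⊢; omega
  exact T.post_order _ i hi a ha j hj hi_le_a ha_le_j hxi hxj.parent

lemma injOn_depth_separator {z : α} (hz : ∀ x ∈ separator T a b, T.Desc (T.parent x) z) :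
    Set.InjOn T.depth (separator T a b) := by
  rw [separator_eq_nbhd_rootPaths] at hz ⊢
  refine injOn_depth_nbhd_rootPaths T.encard_children_le_two ?_ hz
  rintro _ ⟨i, hi, rfl⟩
  exact T.leaf_isLeaf i (Finset.mem_sdiff.mp hi).1

end DeltaPostfixTree

/-- For a `Δ`-postfix tree `T` (`Δ ≥ 2`) and a nonempty proper
subinterval `[a,b]` of `[Δ]` with `a = 1` or `b = Δ`, no two distinct vertices of
the `[a,b]`-separator `S` have the same distance to the root. -/
theorem statement6 {α : Type*} [Fintype α] {Δ : ℕ} (hΔ : 2 ≤ Δ)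
    (T : DeltaPostfixTree α Δ) (a b : ℕ) (ha : 1 ≤ a) (hab : a ≤ b) (hb : b ≤ Δ)
    (hend : a = 1 ∨ b = Δ) (hproper : ¬(a = 1 ∧ b = Δ)) :
    ∀ x ∈ separator T a b, ∀ y ∈ separator T a b, x ≠ y →
      T.toRTree.depth x ≠ T.toRTree.depth y := by
  intro x hx y hy hxy hdepth
  suffices hinj : Set.InjOn T.depth (separator T a b) from hxy (hinj hx hy hdepth)
  rcases hend with rfl | rfl
  · exact DeltaPostfixTree.injOn_depth_separator fun _ =>
      DeltaPostfixTree.desc_parent_leaf_of_mem_separator_one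
  · exact DeltaPostfixTree.injOn_depth_separator fun _ =>
      DeltaPostfixTree.desc_parent_leaf_of_mem_separator_last
end

section
/- Let Δ ≥ 1, let 𝒢 = (V,(E_t)_{t=1}^τ) be a temporal graph with τ = LΔ for an integer L ≥ 1, and for each i ∈ [L] let ℳ_i be a family of Δ-temporal matchings of 𝒢[Δ(i−1)+1, Δi] that is i-complete for 𝒢. Define T_1[M] := |M| for M ∈ ℳ_1 and, for i > 1 and M ∈ ℳ_i, T_i[M] := max({ |M| + T_{i−1}[M'] : M' ∈ ℳ_{i−1} and M ∪ M' is a Δ-temporal matching of 𝒢 } ∪ {0}). Then for every i ∈ [L] and every Δ-temporal matching M of 𝒢, there exists M' ∈ ℳ_i such that T_i[M'] ≥ |M[1, Δi]| and M[1, Δ(i−1)] ∪ M' ∪ M[Δi+1, τ] is a Δ-temporal matching of 𝒢 of size at least |M|. -/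
variable {V : Type*}

/-- A family `ℳ` of sets of time edges is `d`-complete for `G` (w.r.t. `Δ`):
for every `Δ`-temporal matching `M` of `G` there is `M' ∈ ℳ` such that
`(M \ M[Δ(d-1)+1, Δd]) ∪ M'` is a `Δ`-temporal matching of `G` of size at
least `|M|`. -/
def DComplete {V : Type*} [DecidableEq V] (G : TemporalGraph V) (Δ d : ℕ)
    (ℳ : Finset (Finset (Sym2 V × ℕ))) : Prop :=
  ∀ M : Finset (Sym2 V × ℕ), IsTemporalMatching G Δ M →
    ∃ M' ∈ ℳ,
      IsTemporalMatching G Δ ((M \ restrict M (Δ * (d - 1) + 1) (Δ * d)) ∪ M') ∧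
      M.card ≤ ((M \ restrict M (Δ * (d - 1) + 1) (Δ * d)) ∪ M').card

open Classical in
/-- The dynamic-programming table: `Ttab G Δ ℳ 1 M = |M|`, and for `i > 1`,
`Ttab G Δ ℳ i M = max({|M| + Ttab G Δ ℳ (i-1) M' : M' ∈ ℳ (i-1), M ∪ M' is a
Δ-temporal matching of G} ∪ {0})`. (The value at `i = 0` is irrelevant.) -/
noncomputable def Ttab {V : Type*} [DecidableEq V] (G : TemporalGraph V) (Δ : ℕ)
    (ℳ : ℕ → Finset (Finset (Sym2 V × ℕ))) :
    ℕ → Finset (Sym2 V × ℕ) → ℕ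
  | 0, M => M.card
  | 1, M => M.card
  | (i + 2), M =>
      ((ℳ (i + 1)).filter (fun M' => IsTemporalMatching G Δ (M ∪ M'))).sup
        (fun M' => M.card + Ttab G Δ ℳ (i + 1) M')

/-!
Call `M[Δ(i-1)+1, Δi]` the `i`-th block of `M`. If replacing it by a set `M'` at least as large,
with all labels after block `i - 1`, gives a matching, then `|M[1, Δi]| ≤ T_i[M']`, whether or not
`M'` was obtained from completeness. For the induction step, write `X` for `M` with block `i + 1`
replaced by `M'` and apply `i`-completeness to `X`, obtaining a replacement `N` of the `i`-th block
of `X`. Labels in `M'` lie beyond block `i`, so `M'` survives that replacement and `M' ∪ N` is a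
matching; hence `T_{i+1}[M'] ≥ |M'| + T_i[N] ≥ |M[Δi+1, Δ(i+1)]| + |X[1, Δi]|`, where
`X[1, Δi] = M[1, Δi]`.
-/

section Restrict

variable {M N : Finset (Sym2 V × ℕ)} {a b c d : ℕ}

lemma restrict_subset (M : Finset (Sym2 V × ℕ)) (a b : ℕ) : restrict M a b ⊆ M :=
  Finset.filter_subset _ _

lemma mem_restrict {x : Sym2 V × ℕ} : x ∈ restrict M a b ↔ x ∈ M ∧ a ≤ x.2 ∧ x.2 ≤ b :=
  Finset.mem_filter

lemma card_restrict_le_add (M : Finset (Sym2 V × ℕ)) (a b c : ℕ) :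
    (restrict M a c).card ≤ (restrict M a b).card + (restrict M (b + 1) c).card := by
  classical
  refine (Finset.card_le_card fun x hx ↦ ?_).trans (Finset.card_union_le _ _)
  simp only [Finset.mem_union, mem_restrict] at hx ⊢
  grind

lemma restrict_subset_restrict_sdiff_union [DecidableEq V] (hcb : c < b) :
    restrict M a c ⊆ restrict (M \ restrict M b d ∪ N) a c := by
  intro x hx
  simp only [Finset.mem_union, Finset.mem_sdiff, mem_restrict] at hx ⊢
  grind

end Restrict

lemma card_le_card_of_card_le_card_sdiff_union {α : Type*} [DecidableEq α] {s t u : Finset α}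
    (hts : t ⊆ s) (h : s.card ≤ (s \ t ∪ u).card) : t.card ≤ u.card := by
  have hunion := Finset.card_union_le (s \ t) u
  have hsdiff := Finset.card_sdiff_add_card_eq_card hts
  omega

section Matching

variable {G : TemporalGraph V} {Δ : ℕ} {M N : Finset (Sym2 V × ℕ)} {a b : ℕ}

lemma IsTemporalMatching.mono (hM : IsTemporalMatching G Δ M) (h : N ⊆ M) :
    IsTemporalMatching G Δ N :=
  ⟨fun x hx ↦ hM.1 x (h hx), fun x hx y hy ↦ hM.2 x (h hx) y (h hy)⟩

lemma IsTimeEdge.le_label_of_tgSlice {x : Sym2 V × ℕ} (hx : IsTimeEdge (tgSlice G a b) x) :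
    a ≤ x.2 := by
  by_contra hlt
  simpa only [tgSlice, hlt, false_and, if_false, Finset.notMem_empty] using hx.1

lemma IsTemporalMatching.sdiff_restrict_eq [DecidableEq V] (hM : IsTemporalMatching G Δ M) :
    M \ restrict M (a + 1) b = restrict M 1 a ∪ restrict M (b + 1) G.tau := by
  ext x
  have hlabel (hx : x ∈ M) : 1 ≤ x.2 ∧ x.2 ≤ G.tau := (hM.1 x hx).2
  simp only [Finset.mem_sdiff, Finset.mem_union, mem_restrict]
  grind

end Matching

section DynamicProgram

variable [DecidableEq V] {G : TemporalGraph V} {Δ i : ℕ}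
  {ℳ : ℕ → Finset (Finset (Sym2 V × ℕ))} {M M' N : Finset (Sym2 V × ℕ)}

lemma card_add_Ttab_le_Ttab_succ (hi : 1 ≤ i) (hN : N ∈ ℳ i)
    (hMN : IsTemporalMatching G Δ (M ∪ N)) :
    M.card + Ttab G Δ ℳ i N ≤ Ttab G Δ ℳ (i + 1) M := by
  obtain ⟨k, rfl⟩ := Nat.exists_eq_add_of_le' hi
  classical
  rw [Ttab]
  exact Finset.le_sup (f := fun N ↦ M.card + Ttab G Δ ℳ (k + 1) N)
    (Finset.mem_filter.2 ⟨hN, hMN⟩)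

theorem card_restrict_le_Ttab (hi : 1 ≤ i)
    (hlabel : ∀ j ∈ Finset.Ico 1 i, ∀ N ∈ ℳ j, ∀ x ∈ N, Δ * (j - 1) < x.2)
    (hcomp : ∀ j ∈ Finset.Ico 1 i, DComplete G Δ j (ℳ j))
    (hM'label : ∀ x ∈ M', Δ * (i - 1) < x.2)
    (hM' : IsTemporalMatching G Δ (M \ restrict M (Δ * (i - 1) + 1) (Δ * i) ∪ M'))
    (hblock : (restrict M (Δ * (i - 1) + 1) (Δ * i)).card ≤ M'.card) :
    (restrict M 1 (Δ * i)).card ≤ Ttab G Δ ℳ i M' := by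
  induction i, hi using Nat.le_induction generalizing M M' with
  | base => simpa [Ttab] using hblock
  | succ i hi ih =>
    rw [Nat.add_sub_cancel] at hM'label hM' hblock
    set X := M \ restrict M (Δ * i + 1) (Δ * (i + 1)) ∪ M'
    have hi_mem : i ∈ Finset.Ico 1 (i + 1) := Finset.mem_Ico.2 ⟨hi, i.lt_succ_self⟩
    have hIco : Finset.Ico 1 i ⊆ Finset.Ico 1 (i + 1) :=
      Finset.Ico_subset_Ico_right i.le_succ
    obtain ⟨N, hN, hXN, hXNcard⟩ := hcomp i hi_mem X hM'
    have hprefix : (restrict X 1 (Δ * i)).card ≤ Ttab G Δ ℳ i N :=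
      ih (fun j hj ↦ hlabel j (hIco hj)) (fun j hj ↦ hcomp j (hIco hj)) (hlabel i hi_mem N hN)
        hXN (card_le_card_of_card_le_card_sdiff_union (restrict_subset X _ _) hXNcard)
    have hM'_survives : M' ⊆ X \ restrict X (Δ * (i - 1) + 1) (Δ * i) := fun x hx ↦
      Finset.mem_sdiff.2 ⟨Finset.mem_union_right _ hx,
        fun hmem ↦ (hM'label x hx).not_ge (mem_restrict.1 hmem).2.2⟩
    have hM'N : IsTemporalMatching G Δ (M' ∪ N) :=
      hXN.mono (Finset.union_subset_union_left hM'_survives)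
    calc (restrict M 1 (Δ * (i + 1))).card
        ≤ (restrict M 1 (Δ * i)).card + (restrict M (Δ * i + 1) (Δ * (i + 1))).card :=
          card_restrict_le_add M _ _ _
      _ ≤ (restrict X 1 (Δ * i)).card + M'.card :=
          Nat.add_le_add (Finset.card_le_card
            (restrict_subset_restrict_sdiff_union (Nat.lt_succ_self _))) hblock
      _ ≤ M'.card + Ttab G Δ ℳ i N := by omega
      _ ≤ Ttab G Δ ℳ (i + 1) M' := card_add_Ttab_le_Ttab_succ hi hN hM'N

theorem statement9_general (hi : 1 ≤ i)
    (hlabel : ∀ j ∈ Finset.Icc 1 i, ∀ N ∈ ℳ j, ∀ x ∈ N, Δ * (j - 1) < x.2)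
    (hcomp : ∀ j ∈ Finset.Icc 1 i, DComplete G Δ j (ℳ j)) (hM : IsTemporalMatching G Δ M) :
    ∃ M' ∈ ℳ i,
      (restrict M 1 (Δ * i)).card ≤ Ttab G Δ ℳ i M' ∧
      IsTemporalMatching G Δ
        (restrict M 1 (Δ * (i - 1)) ∪ M' ∪ restrict M (Δ * i + 1) G.tau) ∧
      M.card ≤
        (restrict M 1 (Δ * (i - 1)) ∪ M' ∪ restrict M (Δ * i + 1) G.tau).card := by
  have hi_mem : i ∈ Finset.Icc 1 i := Finset.mem_Icc.2 ⟨hi, le_rfl⟩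
  obtain ⟨M', hM'mem, hM', hcard⟩ := hcomp i hi_mem M hM
  have hT : (restrict M 1 (Δ * i)).card ≤ Ttab G Δ ℳ i M' :=
    card_restrict_le_Ttab hi (fun j hj ↦ hlabel j (Finset.Ico_subset_Icc_self hj))
      (fun j hj ↦ hcomp j (Finset.Ico_subset_Icc_self hj)) (hlabel i hi_mem M' hM'mem) hM'
      (card_le_card_of_card_le_card_sdiff_union (restrict_subset M _ _) hcard)
  refine ⟨M', hM'mem, hT, ?_⟩
  rw [Finset.union_right_comm, ← hM.sdiff_restrict_eq]
  exact ⟨hM', hcard⟩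

end DynamicProgram

/-- Let `tau = L·Δ` and for each `i ∈ [L]` let `ℳ i` be a
family of `Δ`-temporal matchings of `G[Δ(i-1)+1, Δi]` which is `i`-complete for
`G`. Then for every `i ∈ [L]` and every `Δ`-temporal matching `M` of `G`, there
is an `M' ∈ ℳ i` with `T_i[M'] ≥ |M[1, Δi]|` such that
`M[1, Δ(i-1)] ∪ M' ∪ M[Δi+1, tau]` is a `Δ`-temporal matching of `G` of size at
least `|M|`. -/
theorem statement9 {V : Type*} [DecidableEq V] (Δ L : ℕ) (hΔ : 1 ≤ Δ) (hL : 1 ≤ L)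
    (G : TemporalGraph V) (htau : G.tau = L * Δ)
    (ℳ : ℕ → Finset (Finset (Sym2 V × ℕ)))
    (hmatch : ∀ i ∈ Finset.Icc 1 L, ∀ M ∈ ℳ i,
      IsTemporalMatching (tgSlice G (Δ * (i - 1) + 1) (Δ * i)) Δ M)
    (hcomp : ∀ i ∈ Finset.Icc 1 L, DComplete G Δ i (ℳ i)) :
    ∀ i ∈ Finset.Icc 1 L, ∀ M : Finset (Sym2 V × ℕ), IsTemporalMatching G Δ M →
      ∃ M' ∈ ℳ i,
        (restrict M 1 (Δ * i)).card ≤ Ttab G Δ ℳ i M' ∧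
        IsTemporalMatching G Δ
          (restrict M 1 (Δ * (i - 1)) ∪ M' ∪ restrict M (Δ * i + 1) G.tau) ∧
        M.card ≤
          (restrict M 1 (Δ * (i - 1)) ∪ M' ∪ restrict M (Δ * i + 1) G.tau).card := by
  intro i hi M hM
  have hIcc : Finset.Icc 1 i ⊆ Finset.Icc 1 L :=
    Finset.Icc_subset_Icc_right (Finset.mem_Icc.1 hi).2
  exact statement9_general (Finset.mem_Icc.1 hi).1
    (fun j hj N hN x hx ↦ ((hmatch j (hIcc hj) N hN).1 x hx).le_label_of_tgSlice)
    (fun j hj ↦ hcomp j (hIcc hj)) hM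
end
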